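/- In ℝ⁵ with the standard Euclidean inner product, let S be the set of three vectors (-2/3,-2/3,4/3,1/2,-1/2), (1/3,-2/3,1/3,-1/2,1/2), (-2/3,4/3,-2/3,-1/2,1/2). Then the minimum of ‖x‖² over x in the convex hull of S equals 1/4, and it is attained at the point β₇ = (-1/4,0,1/4,-1/4,1/4). -/

import Mathlib

/-- A vector in `ℝ⁵` with the standard Euclidean inner product. -/
noncomputable def vec5 (a b c d e : ℝ) : EuclideanSpace ℝ (Fin 5) :=
  (WithLp.equiv 2 (Fin 5 → ℝ)).symm ![a, b, c, d, e]

/-- Table (2.3) for `(GL(3)×GL(2), Sym²k³⊗k²)`: the minimum of `‖x‖²` over the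
convex hull of the listed weight vectors equals `1/4`, attained at
`β₇ = ((-1/4) 0 (1/4) (-1/4) (1/4))`. -/
theorem minsq_of_convexHull_weights :
    let S : Set (EuclideanSpace ℝ (Fin 5)) :=
      {vec5 (-2/3) (-2/3) (4/3) (1/2) (-1/2),
       vec5 (1/3) (-2/3) (1/3) (-1/2) (1/2),
       vec5 (-2/3) (4/3) (-2/3) (-1/2) (1/2)}
    let β : EuclideanSpace ℝ (Fin 5) := vec5 (-1/4) 0 (1/4) (-1/4) (1/4)
    β ∈ convexHull ℝ S ∧ ‖β‖ ^ 2 = 1/4 ∧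
      ∀ x ∈ convexHull ℝ S, (1/4 : ℝ) ≤ ‖x‖ ^ 2 := by
  intro S β
  refine ⟨?_, ?_, ?_⟩
  · have h1 : vec5 (-2/3) (-2/3) (4/3) (1/2) (-1/2) ∈ convexHull ℝ S :=
      subset_convexHull ℝ S (by simp [S])
    have h2 : vec5 (1/3) (-2/3) (1/3) (-1/2) (1/2) ∈ convexHull ℝ S :=
      subset_convexHull ℝ S (by simp [S])
    have h3 : vec5 (-2/3) (4/3) (-2/3) (-1/2) (1/2) ∈ convexHull ℝ S :=
      subset_convexHull ℝ S (by simp [S])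
    have hc := convex_convexHull ℝ S
    have h12 := hc h1 h2 (show (0:ℝ) ≤ 3/8 by norm_num) (show (0:ℝ) ≤ 5/8 by norm_num)
      (by norm_num)
    have h := hc h12 h3 (show (0:ℝ) ≤ 2/3 by norm_num) (show (0:ℝ) ≤ 1/3 by norm_num)
      (by norm_num)
    convert h using 1
    ext i
    fin_cases i <;> simp [β, vec5] <;> norm_num
  · rw [EuclideanSpace.norm_sq_eq]
    simp [β, vec5, Fin.sum_univ_succ]
    norm_num
  · intro x hx
    have hsub : convexHull ℝ S ⊆
        {x : EuclideanSpace ℝ (Fin 5) | (1/4 : ℝ) ≤ innerSL ℝ β x} := by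
      apply convexHull_min
      · intro y hy
        simp only [S, Set.mem_insert_iff, Set.mem_singleton_iff] at hy
        rcases hy with rfl | rfl | rfl <;>
          simp [β, vec5, PiLp.inner_apply, Fin.sum_univ_succ] <;> norm_num
      · exact convex_halfSpace_ge (innerSL ℝ β).toLinearMap.isLinear _
    have h := hsub hx
    simp [β, vec5, PiLp.inner_apply, Fin.sum_univ_succ] at h
    rw [EuclideanSpace.norm_sq_eq]
    simp [Fin.sum_univ_succ]
    nlinarith [sq_nonneg (x 0 + 1/4), sq_nonneg (x 1), sq_nonneg (x 2 - 1/4),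
      sq_nonneg (x 3 + 1/4), sq_nonneg (x 4 - 1/4)]
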